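/- Over an algebraically closed field k, every n×n matrix is similar to a symmetric matrix. -/

import Mathlib

/-!
A matrix is similar to a symmetric one as soon as the operator it defines is self-adjoint for a
symmetric bilinear form with an orthonormal basis. The self-adjoint form comes from the primary
decomposition of `kⁿ` as a `k[X]`-module: on a summand `A = k[X] / (pᵉ)` take `(x, y) ↦ f (x * y)`,
where `f` reads off the top coefficient. Since `A` is local, it is spanned by its units, so after
multiplying `f` by a unit one may assume `f 1 ≠ 0`. The resulting form is then not alternating,
and, when every element of `k` is a square, Albert's argument yields an orthonormal basis, in
characteristic two as well.
-/

open Module Polynomial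

section Forms

variable {k V : Type*} [CommRing k] [AddCommGroup V] [Module k V]

/-- Nondegenerate symmetric bilinear forms that are not alternating. The last condition is phrased
so that the form on the zero space is included, which makes the notion stable under products. -/
structure IsNonaltInnerProduct (B : LinearMap.BilinForm k V) : Prop where
  isSymm : B.IsSymm
  nondegenerate : B.Nondegenerate
  subsingleton_of_isAlt : B.IsAlt → Subsingleton V

namespace IsNonaltInnerProduct

variable {B : LinearMap.BilinForm k V}

theorem of_separatingLeft (hsymm : B.IsSymm) (hsep : B.SeparatingLeft)
    (halt : B.IsAlt → Subsingleton V) : IsNonaltInnerProduct B :=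
  ⟨hsymm, hsymm.isRefl.nondegenerate_iff_separatingLeft.2 hsep, halt⟩

theorem comp_equiv {W : Type*} [AddCommGroup W] [Module k W] (hB : IsNonaltInnerProduct B)
    (e : W ≃ₗ[k] V) : IsNonaltInnerProduct (B.comp e.toLinearMap e.toLinearMap) := by
  refine of_separatingLeft ⟨fun x y => hB.isSymm.eq (e x) (e y)⟩ (fun x hx => ?_) fun halt => ?_
  · refine e.map_eq_zero_iff.1 (hB.nondegenerate.1 _ fun y => ?_)
    simpa using hx (e.symm y)
  · have : Subsingleton V := hB.subsingleton_of_isAlt fun x => by simpa using halt (e.symm x)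
    exact e.toEquiv.subsingleton

end IsNonaltInnerProduct

end Forms

section OrthogonalComplement

variable {k V : Type*} [CommRing k] [AddCommGroup V] [Module k V] {B : LinearMap.BilinForm k V}

theorem mem_orthogonal_span_singleton_iff {v x : V} :
    x ∈ B.orthogonal (k ∙ v) ↔ B v x = 0 := by
  rw [LinearMap.BilinForm.mem_orthogonal_iff]
  refine ⟨fun h => h v (Submodule.mem_span_singleton_self v), fun h y hy => ?_⟩
  obtain ⟨a, rfl⟩ := Submodule.mem_span_singleton.1 hy
  simp [h]

theorem exists_basis_fin_cons {v : V} (hv : B v v = 1) {n : ℕ}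
    (b : Basis (Fin n) k (B.orthogonal (k ∙ v))) :
    ∃ b' : Basis (Fin (n + 1)) k V, ⇑b' = Fin.cons v fun i => (b i : V) := by
  refine ⟨Basis.mkFinCons v b (fun c x hx hcx => ?_) fun z => ⟨-B v z, ?_⟩,
    Basis.coe_mkFinCons ..⟩
  · have := congrArg (B v) hcx
    simpa [mem_orthogonal_span_singleton_iff.1 hx, hv] using this
  · rw [mem_orthogonal_span_singleton_iff]
    simp [hv]

theorem toMatrix_fin_cons_eq_one (hB : B.IsSymm) {v : V} (hv : B v v = 1) {n : ℕ}
    {b : Basis (Fin n) k (B.orthogonal (k ∙ v))} {b' : Basis (Fin (n + 1)) k V}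
    (hb' : ⇑b' = Fin.cons v fun i => (b i : V))
    (hb : LinearMap.BilinForm.toMatrix b (B.restrict (B.orthogonal (k ∙ v))) = 1) :
    LinearMap.BilinForm.toMatrix b' B = 1 := by
  have hvb (i : Fin n) : B v (b i) = 0 := mem_orthogonal_span_singleton_iff.1 (b i).2
  have hbv (i : Fin n) : B (b i) v = 0 := (hB.eq _ _).symm.trans (hvb i)
  have hbb (i j : Fin n) : B (b i) (b j) = (1 : Matrix (Fin n) (Fin n) k) i j := by
    rw [← hb, LinearMap.BilinForm.toMatrix_apply]
    rfl
  ext i j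
  rw [LinearMap.BilinForm.toMatrix_apply, hb']
  cases i using Fin.cases <;> cases j using Fin.cases <;>
    simp [hv, hvb, hbv, hbb, Matrix.one_apply, (Fin.succ_ne_zero _).symm]

end OrthogonalComplement

section Orthonormal

variable {k V : Type*} [Field k] [AddCommGroup V] [Module k V] {B : LinearMap.BilinForm k V}

theorem exists_apply_eq_one_of_separatingLeft (hB : B.SeparatingLeft) {w : V} (hw : w ≠ 0) :
    ∃ u, B w u = 1 := by
  obtain ⟨u, hu⟩ : ∃ u, B w u ≠ 0 := by
    by_contra! h
    exact hw (hB w h)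
  exact ⟨(B w u)⁻¹ • u, by simp [hu]⟩

theorem exists_apply_self_eq_one (hk : ∀ a : k, IsSquare a) (hB : ¬ B.IsAlt) :
    ∃ v, B v v = 1 := by
  obtain ⟨v, hv⟩ : ∃ v, B v v ≠ 0 := not_forall.1 hB
  obtain ⟨z, hz⟩ := hk (B v v)
  have hz₀ : z ≠ 0 := by
    rintro rfl
    exact hv (by simpa using hz)
  exact ⟨z⁻¹ • v, by simp [hz, hz₀]⟩

namespace IsNonaltInnerProduct

theorem restrict_orthogonal (hB : IsNonaltInnerProduct B) {v : V} (hv : B v v ≠ 0)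
    (halt : (B.restrict (B.orthogonal (k ∙ v))).IsAlt → Subsingleton (B.orthogonal (k ∙ v))) :
    IsNonaltInnerProduct (B.restrict (B.orthogonal (k ∙ v))) where
  isSymm := ⟨fun x y => hB.isSymm.eq x y⟩
  nondegenerate := LinearMap.BilinForm.restrict_nondegenerate_orthogonal_spanSingleton B
    hB.nondegenerate hB.isSymm.isRefl hv
  subsingleton_of_isAlt := halt

/- If the orthogonal complement of a unit vector `v` is alternating, then for `w`, `u` in it with
`B w u = 1` the vectors `v + w` and `v - u` are again unit vectors, and they are orthogonal. -/
theorem exists_unit_restrict_orthogonal [Nontrivial V] (hB : IsNonaltInnerProduct B)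
    (hk : ∀ a : k, IsSquare a) :
    ∃ v, B v v = 1 ∧ IsNonaltInnerProduct (B.restrict (B.orthogonal (k ∙ v))) := by
  have hcomm (x y : V) : B x y = B y x := hB.isSymm.eq x y
  obtain ⟨v, hv⟩ := exists_apply_self_eq_one hk fun halt =>
    not_subsingleton V (hB.subsingleton_of_isAlt halt)
  by_cases h : (B.restrict (B.orthogonal (k ∙ v))).IsAlt → Subsingleton (B.orthogonal (k ∙ v))
  · exact ⟨v, hv, hB.restrict_orthogonal (hv.trans_ne one_ne_zero) h⟩
  obtain ⟨halt, hnontrivial⟩ := Classical.not_imp.1 h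
  have : Nontrivial (B.orthogonal (k ∙ v)) := not_subsingleton_iff_nontrivial.1 hnontrivial
  obtain ⟨w, hw⟩ := exists_ne (0 : B.orthogonal (k ∙ v))
  obtain ⟨u, hwu⟩ := exists_apply_eq_one_of_separatingLeft
    (LinearMap.BilinForm.restrict_nondegenerate_orthogonal_spanSingleton B
      hB.nondegenerate hB.isSymm.isRefl (hv.trans_ne one_ne_zero)).1 hw
  have hwu : B w u = 1 := hwu
  have hww : B w w = 0 := halt w
  have huu : B u u = 0 := halt u
  have hvw : B v w = 0 := mem_orthogonal_span_singleton_iff.1 w.2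
  have hvu : B v u = 0 := mem_orthogonal_span_singleton_iff.1 u.2
  have hunit : B (v + w) (v + w) = 1 := by simp [hv, hvw, hcomm w v, hww]
  have horth : B (v + w) (v - u) = 0 := by simp [hv, hvu, hcomm w v, hvw, hwu]
  have hunit' : B (v - u) (v - u) = 1 := by simp [hv, hvu, hcomm u v, huu]
  refine ⟨v + w, hunit, hB.restrict_orthogonal (hunit.trans_ne one_ne_zero) fun halt' => ?_⟩
  have : B (v - u) (v - u) = 0 := halt' ⟨v - u, mem_orthogonal_span_singleton_iff.2 horth⟩
  exact absurd (hunit'.symm.trans this) one_ne_zero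

end IsNonaltInnerProduct

theorem IsNonaltInnerProduct.exists_basis_fin_toMatrix_eq_one [FiniteDimensional k V]
    (hk : ∀ a : k, IsSquare a) {n : ℕ} (hn : finrank k V = n) (hB : IsNonaltInnerProduct B) :
    ∃ b : Basis (Fin n) k V, LinearMap.BilinForm.toMatrix b B = 1 := by
  induction n generalizing V with
  | zero => exact ⟨finBasisOfFinrankEq k V hn, Subsingleton.elim _ _⟩
  | succ n ih =>
    have : Nontrivial V := nontrivial_of_finrank_eq_succ hn
    obtain ⟨v, hv, hW⟩ := hB.exists_unit_restrict_orthogonal hk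
    have hfinrank : finrank k (B.orthogonal (k ∙ v)) = n := by
      have := Submodule.finrank_add_eq_of_isCompl
        (LinearMap.BilinForm.isCompl_span_singleton_orthogonal (hv.trans_ne one_ne_zero))
      rw [finrank_span_singleton (by rintro rfl; simp at hv), hn] at this
      omega
    obtain ⟨b, hb⟩ := ih hfinrank hW
    obtain ⟨b', hb'⟩ := exists_basis_fin_cons hv b
    exact ⟨b', toMatrix_fin_cons_eq_one hB.isSymm hv hb' hb⟩

theorem IsNonaltInnerProduct.exists_basis_toMatrix_eq_one (hk : ∀ a : k, IsSquare a)
    {ι : Type*} [Fintype ι] [DecidableEq ι] (b₀ : Basis ι k V) (hB : IsNonaltInnerProduct B) :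
    ∃ b : Basis ι k V, LinearMap.BilinForm.toMatrix b B = 1 := by
  have : FiniteDimensional k V := b₀.finiteDimensional_of_finite
  obtain ⟨b, hb⟩ := hB.exists_basis_fin_toMatrix_eq_one hk (finrank_eq_card_basis b₀)
  let e := (Fintype.equivFin ι).symm
  refine ⟨b.reindex e, ?_⟩
  calc LinearMap.BilinForm.toMatrix (b.reindex e) B
      = (LinearMap.BilinForm.toMatrix b B).submatrix e.symm e.symm := by
        ext i j
        simp [LinearMap.BilinForm.toMatrix_apply]
    _ = 1 := by rw [hb, Matrix.submatrix_one_equiv]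

end Orthonormal

section Balanced

variable {k R : Type*} [CommRing k] [CommRing R]

/-- Non-alternating inner products over `k` on an `R`-module for which every scalar in `R` acts by
a self-adjoint map. For `R = k[X]` this encodes self-adjointness of the operator given by `X`. -/
structure IsBalancedInnerProduct (R : Type*) [CommRing R] {k V : Type*} [CommRing k]
    [AddCommGroup V] [Module k V] [Module R V] (B : LinearMap.BilinForm k V) : Prop
    extends IsNonaltInnerProduct B where
  smul_left (r : R) (x y : V) : B (r • x) y = B x (r • y)

theorem isBalancedInnerProduct_of_subsingleton {V : Type*} [AddCommGroup V] [Module k V]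
    [Module R V] [Subsingleton V] (B : LinearMap.BilinForm k V) : IsBalancedInnerProduct R B where
  toIsNonaltInnerProduct := .of_separatingLeft
    ⟨fun x y => by rw [Subsingleton.elim x y]⟩
    (fun _ _ => Subsingleton.elim _ _) fun _ => inferInstance
  smul_left r x y := by congr 2 <;> exact Subsingleton.elim _ _

theorem IsBalancedInnerProduct.comp_equiv [Algebra k R] {V W : Type*}
    [AddCommGroup V] [Module k V] [Module R V] [IsScalarTower k R V]
    [AddCommGroup W] [Module k W] [Module R W] [IsScalarTower k R W]
    {B : LinearMap.BilinForm k V} (hB : IsBalancedInnerProduct R B) (e : W ≃ₗ[R] V) :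
    IsBalancedInnerProduct R
      (B.comp (e.restrictScalars k).toLinearMap (e.restrictScalars k).toLinearMap) where
  toIsNonaltInnerProduct := hB.toIsNonaltInnerProduct.comp_equiv (e.restrictScalars k)
  smul_left r x y := by simpa using hB.smul_left r (e x) (e y)

theorem IsBalancedInnerProduct.pi {ι : Type*} [Fintype ι] {V : ι → Type*}
    [∀ i, AddCommGroup (V i)] [∀ i, Module k (V i)] [∀ i, Module R (V i)]
    {B : ∀ i, LinearMap.BilinForm k (V i)} (hB : ∀ i, IsBalancedInnerProduct R (B i)) :
    IsBalancedInnerProduct R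
      (∑ i, (B i).comp (LinearMap.proj i) (LinearMap.proj i) :
        LinearMap.BilinForm k (∀ i, V i)) := by
  classical
  set S : LinearMap.BilinForm k (∀ i, V i) :=
    ∑ i, (B i).comp (LinearMap.proj i) (LinearMap.proj i)
  have hS (x y : ∀ i, V i) : S x y = ∑ i, B i (x i) (y i) := by simp [S]
  have hS_single (x : ∀ i, V i) (i : ι) (y : V i) : S x (Pi.single i y) = B i (x i) y := by
    rw [hS, Finset.sum_eq_single i (fun j _ hj => by simp [hj]) (by simp), Pi.single_eq_same]
  refine ⟨.of_separatingLeft ⟨fun x y => ?_⟩ (fun x hx => ?_) fun halt => ?_, fun r x y => ?_⟩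
  · rw [hS, hS]
    exact Finset.sum_congr rfl fun i _ => (hB i).isSymm.eq (x i) (y i)
  · exact funext fun i => (hB i).nondegenerate.1 (x i) fun y => by rw [← hS_single, hx]
  · have (i : ι) : Subsingleton (V i) := (hB i).subsingleton_of_isAlt fun x => by
      simpa [hS_single] using halt (Pi.single i x)
    infer_instance
  · simp only [hS, Pi.smul_apply, (hB _).smul_left]

end Balanced

section MulForm

variable {k A : Type*} [CommRing k] [CommRing A] [Algebra k A]

/-- The bilinear form `(x, y) ↦ f (x * y)` attached to a functional on an algebra; it is
nondegenerate exactly when `f` is a Frobenius functional. -/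
def mulForm (f : Dual k A) : LinearMap.BilinForm k A :=
  (LinearMap.mul k A).compr₂ f

theorem mulForm_apply (f : Dual k A) (x y : A) : mulForm f x y = f (x * y) := rfl

theorem isBalancedInnerProduct_mulForm (R : Type*) [CommRing R] [Algebra R A] {f : Dual k A}
    (hf : (mulForm f).SeparatingLeft) (hf₁ : f 1 ≠ 0) :
    IsBalancedInnerProduct R (mulForm f) where
  toIsNonaltInnerProduct := .of_separatingLeft
    ⟨fun x y => by simp [mulForm_apply, mul_comm]⟩ hf
    fun halt => absurd (by simpa [mulForm_apply] using halt 1) hf₁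
  smul_left r x y := by simp [mulForm_apply]

theorem exists_isUnit_apply_ne_zero [IsLocalRing A] {f : Dual k A} (hf : f ≠ 0) :
    ∃ u, IsUnit u ∧ f u ≠ 0 := by
  obtain ⟨a, ha⟩ : ∃ a, f a ≠ 0 := by
    by_contra! h
    exact hf (LinearMap.ext h)
  by_contra! hunits
  have hf₁ : f 1 = 0 := hunits 1 isUnit_one
  rcases IsLocalRing.isUnit_or_isUnit_one_sub_self a with h | h
  · exact ha (hunits a h)
  · exact ha (by simpa [hf₁] using hunits (1 - a) h)

theorem exists_isBalancedInnerProduct_of_isLocalRing (R : Type*) [CommRing R] [Algebra R A]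
    [IsLocalRing A] {f : Dual k A} (hf : (mulForm f).SeparatingLeft) :
    ∃ B : LinearMap.BilinForm k A, IsBalancedInnerProduct R B := by
  have hf₀ : f ≠ 0 := by
    rintro rfl
    exact one_ne_zero (hf 1 fun y => by simp [mulForm_apply])
  obtain ⟨u, hu, hfu⟩ := exists_isUnit_apply_ne_zero hf₀
  let g : Dual k A := f ∘ₗ LinearMap.mulLeft k u
  have hg : (mulForm g).SeparatingLeft := fun x hx =>
    hu.mul_right_eq_zero.1 <| hf _ fun y => by simpa [mulForm_apply, g, mul_assoc] using hx y
  exact ⟨mulForm g, isBalancedInnerProduct_mulForm R hg (by simpa [g] using hfu)⟩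

theorem basis_repr_aeval_gen (pb : PowerBasis k A) {p : k[X]} (hp : p.natDegree < pb.dim)
    (i : Fin pb.dim) : pb.basis.repr (aeval pb.gen p) i = p.coeff i := by
  rw [aeval_eq_sum_range' hp, ← Fin.sum_univ_eq_sum_range fun j => p.coeff j • pb.gen ^ j]
  simp_rw [← pb.basis_eq_pow]
  rw [Basis.repr_sum_self]

theorem exists_separatingLeft_mulForm_of_powerBasis [Nontrivial A] (pb : PowerBasis k A) :
    ∃ f : Dual k A, (mulForm f).SeparatingLeft := by
  have hdim : pb.dim - 1 < pb.dim := Nat.sub_lt pb.dim_pos one_pos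
  refine ⟨pb.basis.coord ⟨pb.dim - 1, hdim⟩, fun x hx => ?_⟩
  obtain ⟨p, hp, rfl⟩ := pb.exists_eq_aeval x
  set m := pb.dim - 1 - p.natDegree
  have hdeg : (p * X ^ m).natDegree ≤ pb.dim - 1 :=
    natDegree_mul_le_of_le le_rfl (natDegree_X_pow_le m) |>.trans (by omega)
  have hgen : pb.gen ^ m = aeval pb.gen (X ^ m : k[X]) := by simp
  have hlead : p.leadingCoeff = 0 := calc
    p.leadingCoeff = (p * X ^ m).coeff (pb.dim - 1) := by
      rw [show pb.dim - 1 = p.natDegree + m by omega, coeff_mul_X_pow, leadingCoeff]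
    _ = mulForm (pb.basis.coord ⟨pb.dim - 1, hdim⟩) (aeval pb.gen p) (pb.gen ^ m) := by
      rw [mulForm_apply, Basis.coord_apply, hgen, ← map_mul,
        basis_repr_aeval_gen pb (by omega)]
    _ = 0 := hx _
  rw [leadingCoeff_eq_zero.1 hlead, map_zero]

end MulForm

theorem isLocalRing_quotient_pow {R : Type*} [CommRing R] (m : Ideal R) [hm : m.IsMaximal]
    {n : ℕ} (hn : n ≠ 0) : IsLocalRing (R ⧸ m ^ n) := by
  have : Nontrivial (R ⧸ m ^ n) :=
    Ideal.Quotient.nontrivial_iff.2 fun h => hm.ne_top (top_unique (h ▸ Ideal.pow_le_self hn))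
  have isUnit_mk {a : R} (ha : a ∉ m) : IsUnit (Ideal.Quotient.mk (m ^ n) a) := by
    obtain ⟨b, c, hc, hbc⟩ := hm.exists_inv ha
    have hnil : IsNilpotent (Ideal.Quotient.mk (m ^ n) c) :=
      ⟨n, by rw [← map_pow, Ideal.Quotient.eq_zero_iff_mem]; exact Ideal.pow_mem_pow hc n⟩
    refine isUnit_of_mul_isUnit_right (x := Ideal.Quotient.mk (m ^ n) b) ?_
    rw [← map_mul, eq_sub_of_add_eq hbc, map_sub, map_one]
    exact hnil.isUnit_one_sub
  refine .of_isUnit_or_isUnit_one_sub_self fun x => ?_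
  obtain ⟨a, rfl⟩ := Ideal.Quotient.mk_surjective x
  by_cases ha : a ∈ m
  · right
    rw [← map_one (Ideal.Quotient.mk (m ^ n)), ← map_sub]
    exact isUnit_mk fun h => hm.ne_top ((m.eq_top_iff_one).2 (by simpa using add_mem h ha))
  · exact .inl (isUnit_mk ha)

section PolynomialModules

variable {k : Type*} [Field k]

theorem exists_isBalancedInnerProduct_quotient_pow {p : k[X]} (hp : Irreducible p) (n : ℕ) :
    ∃ B : LinearMap.BilinForm k (k[X] ⧸ k[X] ∙ p ^ n), IsBalancedInnerProduct k[X] B := by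
  rcases eq_or_ne n 0 with rfl | hn
  · have : Subsingleton (k[X] ⧸ k[X] ∙ p ^ 0) := by
      rw [pow_zero, Submodule.Quotient.subsingleton_iff]
      exact Ideal.span_singleton_one
    exact ⟨0, isBalancedInnerProduct_of_subsingleton _⟩
  have : (Ideal.span {p}).IsMaximal := PrincipalIdealRing.isMaximal_of_irreducible hp
  have : IsLocalRing (k[X] ⧸ Ideal.span {p ^ n}) := by
    have := isLocalRing_quotient_pow (Ideal.span {p}) hn
    rwa [Ideal.span_singleton_pow] at this
  let pb : PowerBasis k (k[X] ⧸ Ideal.span {p ^ n}) :=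
    AdjoinRoot.powerBasis (pow_ne_zero n hp.ne_zero)
  obtain ⟨f, hf⟩ := exists_separatingLeft_mulForm_of_powerBasis pb
  exact exists_isBalancedInnerProduct_of_isLocalRing (A := k[X] ⧸ Ideal.span {p ^ n}) k[X] hf

theorem exists_isBalancedInnerProduct_of_isTorsion {V : Type*} [AddCommGroup V] [Module k V]
    [Module k[X] V] [IsScalarTower k k[X] V] [Module.Finite k[X] V] (hV : IsTorsion k[X] V) :
    ∃ B : LinearMap.BilinForm k V, IsBalancedInnerProduct k[X] B := by
  classical
  obtain ⟨ι, _, p, hp, n, ⟨e⟩⟩ := equiv_directSum_of_isTorsion hV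
  choose B hB using fun i => exists_isBalancedInnerProduct_quotient_pow (hp i) (n i)
  exact ⟨_, (IsBalancedInnerProduct.pi hB).comp_equiv
    (e.trans (DirectSum.linearEquivFunOnFintype k[X] ι _))⟩

theorem exists_isNonaltInnerProduct_isSelfAdjoint {V : Type*} [AddCommGroup V] [Module k V]
    [FiniteDimensional k V] (T : End k V) :
    ∃ B : LinearMap.BilinForm k V, IsNonaltInnerProduct B ∧ B.IsSelfAdjoint T := by
  obtain ⟨B, hB⟩ := exists_isBalancedInnerProduct_of_isTorsion
    (AEval.isTorsion_of_finiteDimensional k V T)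
  refine ⟨_, hB.toIsNonaltInnerProduct.comp_equiv (AEval.of k V T), fun x y => ?_⟩
  simpa [AEval.X_smul_of] using hB.smul_left X (AEval.of k V T x) (AEval.of k V T y)

end PolynomialModules

theorem isSymm_toMatrix_of_isSelfAdjoint {R V ι : Type*} [CommRing R] [AddCommGroup V] [Module R V]
    [Fintype ι] [DecidableEq ι] {B : LinearMap.BilinForm R V} {b : Basis ι R V}
    (hb : LinearMap.BilinForm.toMatrix b B = 1) {T : End R V} (hT : B.IsSelfAdjoint T) :
    (LinearMap.toMatrix b b T).IsSymm := calc
  (LinearMap.toMatrix b b T).transpose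
      = LinearMap.BilinForm.toMatrix b (B.compLeft T) := by
        rw [LinearMap.BilinForm.toMatrix_compLeft, hb, mul_one]
  _ = LinearMap.BilinForm.toMatrix b (B.compRight T) := by
        congr 1
        exact LinearMap.ext₂ hT
  _ = LinearMap.toMatrix b b T := by
        rw [LinearMap.BilinForm.toMatrix_compRight, hb, one_mul]

theorem stmt6_general {k ι : Type*} [Field k] (hk : ∀ a : k, IsSquare a) [Fintype ι]
    [DecidableEq ι] (M : Matrix ι ι k) :
    ∃ P : (Matrix ι ι k)ˣ, ((P : Matrix ι ι k) * M * (↑P⁻¹ : Matrix ι ι k)).IsSymm := by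
  obtain ⟨B, hB, hM⟩ := exists_isNonaltInnerProduct_isSelfAdjoint (Matrix.toLin' M)
  let c := Pi.basisFun k ι
  obtain ⟨b, hb⟩ := hB.exists_basis_toMatrix_eq_one hk c
  refine ⟨⟨b.toMatrix c, c.toMatrix b, b.toMatrix_mul_toMatrix_flip c,
    c.toMatrix_mul_toMatrix_flip b⟩, ?_⟩
  have hconj : b.toMatrix c * M * c.toMatrix b = LinearMap.toMatrix b b (Matrix.toLin' M) := by
    rw [← basis_toMatrix_mul_linearMap_toMatrix_mul_basis_toMatrix b c b c,
      LinearMap.toMatrix_eq_toMatrix', LinearMap.toMatrix'_toLin']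
  simpa [hconj] using isSymm_toMatrix_of_isSelfAdjoint hb hM

/-- Over an algebraically closed field, every `n×n` matrix is similar to a
symmetric matrix. -/
theorem stmt6 {k : Type*} [Field k] [IsAlgClosed k] {n : ℕ}
    (M : Matrix (Fin n) (Fin n) k) :
    ∃ P : (Matrix (Fin n) (Fin n) k)ˣ,
      ((P : Matrix (Fin n) (Fin n) k) * M * ((P⁻¹ : (Matrix (Fin n) (Fin n) k)ˣ) :
        Matrix (Fin n) (Fin n) k)).IsSymm :=
  stmt6_general IsAlgClosed.exists_eq_mul_self M
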